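/- For the asymptotic density zero ideal 𝒵: non(M_𝒵) = max{𝔟, non(ℰ)} and cov(M_𝒵) = min{𝔡, cov(ℰ)}. -/

import Mathlib

open Cardinal Filter Set
open scoped ENNReal

noncomputable section

/-- An ideal on a (countable) set `X`, in the sense of the paper: a proper family of
subsets of `X` closed under taking subsets and finite unions and containing all
finite subsets of `X`. -/
structure IsIdealOn {X : Type} (I : Set (Set X)) : Prop where
  subset_mem : ∀ ⦃A B : Set X⦄, A ⊆ B → B ∈ I → A ∈ I
  union_mem : ∀ ⦃A B : Set X⦄, A ∈ I → B ∈ I → A ∪ B ∈ I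
  finite_mem : ∀ ⦃A : Set X⦄, A.Finite → A ∈ I
  proper : (univ : Set X) ∉ I

/-- The finite initial segment `x ↾ n` of `x : X^ω`, as a list (an element of `X^{<ω}`). -/
def seg {X : Type} (x : ℕ → X) (n : ℕ) : List X := (List.range n).map x

/-- The `I`-Miller null ideal `M_I`: the σ-ideal on `X^ω` generated by the sets
`M_φ = {x | ∀^∞ n, x n ∈ φ (x ↾ n)}`, where `φ : X^{<ω} → I`.  (A set is in the
generated σ-ideal iff it is covered by countably many generators.) -/
def MIdeal {X : Type} (I : Set (Set X)) : Set (Set (ℕ → X)) :=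
  {A | ∃ φ : ℕ → List X → Set X, (∀ n s, φ n s ∈ I) ∧
    A ⊆ ⋃ n, {x : ℕ → X | ∀ᶠ m in atTop, x m ∈ φ n (seg x m)}}

/-- The σ-ideal `K_I` on `X^ω` generated by the sets
`K_φ = {x | ∀^∞ n, x n ∈ φ n}`, where `φ : ω → I`. -/
def KIdeal {X : Type} (I : Set (Set X)) : Set (Set (ℕ → X)) :=
  {A | ∃ φ : ℕ → ℕ → Set X, (∀ n m, φ n m ∈ I) ∧
    A ⊆ ⋃ n, {x : ℕ → X | ∀ᶠ m in atTop, x m ∈ φ n m}}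

/-- Additivity `add(J)` of a (σ-)ideal `J`: the least cardinality of a subfamily of `J`
whose union is not in `J`. -/
def addIdeal {Y : Type} (J : Set (Set Y)) : Cardinal :=
  sInf {c | ∃ 𝒜 : Set (Set Y), 𝒜 ⊆ J ∧ ⋃₀ 𝒜 ∉ J ∧ Cardinal.mk 𝒜 = c}

/-- Covering number `cov(J)`: the least cardinality of a subfamily of `J` covering `Y`. -/
def covIdeal {Y : Type} (J : Set (Set Y)) : Cardinal :=
  sInf {c | ∃ 𝒜 : Set (Set Y), 𝒜 ⊆ J ∧ ⋃₀ 𝒜 = Set.univ ∧ Cardinal.mk 𝒜 = c}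

/-- Uniformity `non(J)`: the least cardinality of a subset of `Y` not in `J`. -/
def nonIdeal {Y : Type} (J : Set (Set Y)) : Cardinal :=
  sInf {c | ∃ S : Set Y, S ∉ J ∧ Cardinal.mk S = c}

/-- Cofinality `cof(J)`: the least cardinality of a cofinal (w.r.t. `⊆`) subfamily of `J`. -/
def cofIdeal {Y : Type} (J : Set (Set Y)) : Cardinal :=
  sInf {c | ∃ 𝒜 : Set (Set Y), 𝒜 ⊆ J ∧ (∀ B ∈ J, ∃ A ∈ 𝒜, B ⊆ A) ∧ Cardinal.mk 𝒜 = c}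

/-- `f ≤* g`: eventual domination on `ω^ω`. -/
def LeStar (f g : ℕ → ℕ) : Prop := ∀ᶠ n in atTop, f n ≤ g n

/-- The bounding number `𝔟`. -/
def bNum : Cardinal :=
  sInf {c | ∃ F : Set (ℕ → ℕ), (∀ g : ℕ → ℕ, ∃ f ∈ F, ¬ LeStar f g) ∧ Cardinal.mk F = c}

/-- The dominating number `𝔡`. -/
def dNum : Cardinal :=
  sInf {c | ∃ F : Set (ℕ → ℕ), (∀ f : ℕ → ℕ, ∃ g ∈ F, LeStar f g) ∧ Cardinal.mk F = c}

/-- `A ⊆* B`: almost inclusion (`A \ B` finite). -/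
def AlSub {X : Type} (A B : Set X) : Prop := (A \ B).Finite

/-- The set of cardinalities of witnessing families for `add*_ω(I)`: families `𝒜 ⊆ I`
such that for every countable `B̄ ⊆ I` some `A ∈ 𝒜` satisfies `A ⊄* B` for all `B ∈ B̄`.
`add*_ω(I)` is the minimum of this set (`∞` if it is empty). -/
def addStarOmegaFam {X : Type} (I : Set (Set X)) : Set Cardinal :=
  {c | ∃ 𝒜 : Set (Set X), 𝒜 ⊆ I ∧
    (∀ B : ℕ → Set X, (∀ n, B n ∈ I) → ∃ A ∈ 𝒜, ∀ n, ¬ AlSub A (B n)) ∧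
    Cardinal.mk 𝒜 = c}

/-- The set of cardinalities of witnessing families for `cof*_ω(I)`: families `𝒜` of
countable subsets of `I` such that for every countable `B̄ ⊆ I` there is `Ā ∈ 𝒜` with:
every `B ∈ B̄` satisfies `B ⊆* A` for some `A ∈ Ā`.  `cof*_ω(I)` is the minimum. -/
def cofStarOmegaFam {X : Type} (I : Set (Set X)) : Set Cardinal :=
  {c | ∃ 𝒜 : Set (Set (Set X)), (∀ As ∈ 𝒜, As.Countable ∧ As ⊆ I) ∧
    (∀ B : ℕ → Set X, (∀ n, B n ∈ I) → ∃ As ∈ 𝒜, ∀ n, ∃ A ∈ As, AlSub (B n) A) ∧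
    Cardinal.mk 𝒜 = c}

/-- The set of cardinalities of witnessing families for `non*_ω(I)`: families `𝒜` of
infinite subsets of `X` such that for every countable `B̄ ⊆ I` there is `A ∈ 𝒜` with
`A ∩ B` finite for all `B ∈ B̄`.  `non*_ω(I)` is the minimum of this set. -/
def nonStarOmegaFam {X : Type} (I : Set (Set X)) : Set Cardinal :=
  {c | ∃ 𝒜 : Set (Set X), (∀ A ∈ 𝒜, A.Infinite) ∧
    (∀ B : ℕ → Set X, (∀ n, B n ∈ I) → ∃ A ∈ 𝒜, ∀ n, (A ∩ B n).Finite) ∧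
    Cardinal.mk 𝒜 = c}

/-- The set of cardinalities of witnessing families for `cov*(I)`: families `𝒜 ⊆ I` such
that every infinite `B ⊆ X` has infinite intersection with some member of `𝒜`.
`cov*(I)` is the minimum of this set (`∞` if it is empty, i.e. if `I` is not tall). -/
def covStarFam {X : Type} (I : Set (Set X)) : Set Cardinal :=
  {c | ∃ 𝒜 : Set (Set X), 𝒜 ⊆ I ∧
    (∀ B : Set X, B.Infinite → ∃ A ∈ 𝒜, (A ∩ B).Infinite) ∧ Cardinal.mk 𝒜 = c}

/-- The set of cardinalities of witnessing families for `non*(I)`: families `𝒜` of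
infinite subsets of `X` such that every `B ∈ I` has finite intersection with some
member of `𝒜`.  `non*(I)` is the minimum of this set. -/
def nonStarFam {X : Type} (I : Set (Set X)) : Set Cardinal :=
  {c | ∃ 𝒜 : Set (Set X), (∀ A ∈ 𝒜, A.Infinite) ∧
    (∀ B ∈ I, ∃ A ∈ 𝒜, (A ∩ B).Finite) ∧ Cardinal.mk 𝒜 = c}

/-- The meager ideal of the product space `X^ω`, where `X` carries the discrete
topology (for countable `X` this is a Polish space). -/
def meagerIdeal (X : Type) : Set (Set (ℕ → X)) :=
  letI : TopologicalSpace X := ⊥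
  {A : Set (ℕ → X) | IsMeagre A}

/-- The Fubini product `I ⊗ J` of two ideals. -/
def Fubini {X Y : Type} (I : Set (Set X)) (J : Set (Set Y)) : Set (Set (X × Y)) :=
  {A | {x : X | {y : Y | (x, y) ∈ A} ∉ J} ∈ I}

/-- The ideal `Fin` of finite subsets of `X`. -/
def finIdeal (X : Type) : Set (Set X) := {A : Set X | A.Finite}

/-- The nowhere dense ideal on `2^{<ω}`: `A` belongs to it iff for every `s` there is an
extension `t ⊇ s` none of whose extensions belongs to `A`. -/
def nwdIdeal : Set (Set (List Bool)) :=
  {A | ∀ s : List Bool, ∃ t : List Bool, s <+: t ∧ ∀ u : List Bool, t <+: u → u ∉ A}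

/-- A submeasure: monotone, finitely subadditive, vanishing on `∅`. -/
def IsSubmeasure (φ : Set ℕ → ℝ≥0∞) : Prop :=
  φ ∅ = 0 ∧ (∀ A B : Set ℕ, A ⊆ B → φ A ≤ φ B) ∧ ∀ A B : Set ℕ, φ (A ∪ B) ≤ φ A + φ B

/-- `I` is gradually fragmented: there are a partition `⟨P n⟩` of `ω` into nonempty finite
sets and submeasures `φ n` with `A ∈ I ↔ sup_n φ n (A ∩ P n) < ∞`, together with
`f : ω → ω` such that for all `n, i`, for all but finitely many `j`: any family of at
most `i` subsets of `P j`, each of `φ j`-value `≤ n`, has union of `φ j`-value `≤ f n`. -/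
def GraduallyFragmented (I : Set (Set ℕ)) : Prop :=
  ∃ (P : ℕ → Set ℕ) (φ : ℕ → Set ℕ → ℝ≥0∞) (f : ℕ → ℕ),
    (∀ n, (P n).Finite) ∧ (∀ n, (P n).Nonempty) ∧
    (∀ n m, n ≠ m → Disjoint (P n) (P m)) ∧ (⋃ n, P n) = Set.univ ∧
    (∀ n, IsSubmeasure (φ n)) ∧
    (∀ A : Set ℕ, A ∈ I ↔ (⨆ n, φ n (A ∩ P n)) < ⊤) ∧
    (∀ n i : ℕ, ∀ᶠ j in atTop, ∀ ℬ : Finset (Set ℕ), ℬ.card ≤ i →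
      (∀ B ∈ ℬ, B ⊆ P j) → (∀ B ∈ ℬ, φ j B ≤ (n : ℝ≥0∞)) →
      φ j (⋃ B ∈ ℬ, B) ≤ ((f n : ℕ) : ℝ≥0∞))

/-- The basic clopen cylinder of `2^ω` determined by a finite binary string. -/
def cylSet (s : List Bool) : Set (ℕ → Bool) :=
  {x | ∀ i : Fin s.length, x i.val = s.get i}

/-- `A ⊆ 2^ω` is null for the uniform (coin-flipping) product measure: for every `ε > 0`
it is covered by countably many cylinders of total weight `≤ ε` (the cylinder of a
string `s` has weight `2^{-|s|}`). -/
def IsNullCantor (A : Set (ℕ → Bool)) : Prop :=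
  ∀ ε : ℝ≥0∞, 0 < ε → ∃ s : ℕ → List Bool,
    A ⊆ (⋃ n, cylSet (s n)) ∧ (∑' n : ℕ, (2⁻¹ : ℝ≥0∞) ^ (s n).length) ≤ ε

/-- Coordinatewise addition modulo 2 on `2^ω`. -/
def xorAdd (x y : ℕ → Bool) : ℕ → Bool := fun n => xor (x n) (y n)

/-- The transitive additivity `add_t(𝒩)` of the null ideal of `2^ω`:
`min {|A| : A ⊆ 2^ω ∧ ∃ X ∈ 𝒩, A + X ∉ 𝒩}`. -/
def addTNull : Cardinal :=
  sInf {c | ∃ A : Set (ℕ → Bool),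
    (∃ N : Set (ℕ → Bool), IsNullCantor N ∧ ¬ IsNullCantor (Set.image2 xorAdd A N)) ∧
    Cardinal.mk A = c}

/-- Kada's cardinal invariant `𝔩`: the least `κ` such that for every `g ∈ ω^ω` there is a
family `𝒮`, of size `κ`, of slaloms `S` with `S i ⊆ {0, …, g i}` and `|S i| ≤ i`, such
that every `f ≤* g` satisfies `f ∈* S` for some `S ∈ 𝒮`. -/
def lNum : Cardinal :=
  sInf {c : Cardinal | ∀ g : ℕ → ℕ, ∃ 𝒮 : Set (ℕ → Finset ℕ),
    (∀ S ∈ 𝒮, ∀ i : ℕ, S i ⊆ Finset.range (g i + 1) ∧ (S i).card ≤ i) ∧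
    (∀ f : ℕ → ℕ, LeStar f g → ∃ S ∈ 𝒮, ∀ᶠ i in atTop, f i ∈ S i) ∧
    Cardinal.mk 𝒮 = c}

/-- Membership in `C ⊆ 2^ω` only depends on the first `n` coordinates. -/
def DeterminedBy (C : Set (ℕ → Bool)) (n : ℕ) : Prop :=
  ∀ x y : ℕ → Bool, (∀ i < n, x i = y i) → (x ∈ C ↔ y ∈ C)

/-- Extension of a finite binary string by `false`s. -/
def extendFalse {n : ℕ} (s : Fin n → Bool) : ℕ → Bool :=
  fun i => if h : i < n then s ⟨i, h⟩ else false

/-- `C ⊆ 2^ω` has uniform product measure `1/2`: for some `n`, membership in `C` depends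
only on the first `n` coordinates and exactly half of the `2^n` cylinders of level `n`
are included in `C`. -/
def HalfMeasure (C : Set (ℕ → Bool)) : Prop :=
  ∃ n : ℕ, DeterminedBy C n ∧
    2 * Nat.card {s : Fin n → Bool // extendFalse s ∈ C} = 2 ^ n

/-- Clopenness in the Cantor space `2^ω` (`Bool` discrete, product topology). -/
def IsClopenCantor (C : Set (ℕ → Bool)) : Prop :=
  letI : TopologicalSpace Bool := ⊥
  IsClopen C

/-- Closedness in the Cantor space `2^ω`. -/
def IsClosedCantor (C : Set (ℕ → Bool)) : Prop :=
  letI : TopologicalSpace Bool := ⊥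
  IsClosed C

/-- `Ω`: the (countable) set of clopen subsets of `2^ω` of measure `1/2`. -/
abbrev SoleckiBase : Type := {C : Set (ℕ → Bool) // IsClopenCantor C ∧ HalfMeasure C}

/-- The Solecki ideal `𝒮` on `Ω`: the ideal generated by the sets
`I_y = {C ∈ Ω : y ∈ C}` for `y ∈ 2^ω`. -/
def SoleckiIdeal : Set (Set SoleckiBase) :=
  {A | ∃ F : Finset (ℕ → Bool), A ⊆ ⋃ y ∈ F, {C : SoleckiBase | y ∈ C.val}}

/-- `cov_ω(𝒩)`: the least cardinality of a family of Lebesgue-null sets of reals such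
that every countable set of reals is contained in one of them. -/
def covOmegaNull : Cardinal :=
  sInf {c | ∃ 𝒜 : Set (Set ℝ), (∀ N ∈ 𝒜, MeasureTheory.volume N = 0) ∧
    (∀ B : Set ℝ, B.Countable → ∃ N ∈ 𝒜, B ⊆ N) ∧ Cardinal.mk 𝒜 = c}

/-- `non(𝒩)`: the least cardinality of a non-null set of reals. -/
def nonNullReal : Cardinal :=
  sInf {c | ∃ S : Set ℝ, MeasureTheory.volume S ≠ 0 ∧ Cardinal.mk S = c}

/-- The eventually different ideal `ℰ𝒟` on `ω × ω`. -/
def EDIdeal : Set (Set (ℕ × ℕ)) :=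
  {A | ∃ k : ℕ, ∀ᶠ n in atTop,
    {m : ℕ | (n, m) ∈ A}.Finite ∧ {m : ℕ | (n, m) ∈ A}.ncard ≤ k}

/-- Characteristic function identifying `P(ω)` with `2^ω`. -/
def chiSet (A : Set ℕ) : ℕ → Bool :=
  fun n => @decide (n ∈ A) (Classical.propDecidable _)

/-- `I ⊆ P(ω)` is `F_σ`: under the identification `P(ω) ≅ 2^ω`, `I` is a countable
union of closed subsets of the Cantor space. -/
def IsFSigmaIdeal (I : Set (Set ℕ)) : Prop :=
  ∃ C : ℕ → Set (ℕ → Bool), (∀ n, IsClosedCantor (C n)) ∧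
    ∀ A : Set ℕ, A ∈ I ↔ chiSet A ∈ ⋃ n, C n

/-- The underlying countable set of `Fin^{⊗(n+1)}`: `FinPowType 0 = ω`,
`FinPowType (n+1) = ω × FinPowType n`. -/
def FinPowType : ℕ → Type
  | 0 => ℕ
  | n + 1 => ℕ × FinPowType n

/-- The iterated Fubini power of `Fin`: `FinPowIdeal 0 = Fin`, and
`FinPowIdeal (n+1) = Fin ⊗ FinPowIdeal n`; thus `Fin^{⊗k} = FinPowIdeal (k-1)`. -/
def FinPowIdeal : (n : ℕ) → Set (Set (FinPowType n))
  | 0 => finIdeal ℕ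
  | n + 1 => Fubini (finIdeal ℕ) (FinPowIdeal n)

/-- `π` `k`-constantly bounding-predicts `f`: for all but finitely many `i` there is
`j ∈ [i, i + k)` with `f j ≤ π (f ↾ j)`. -/
def ConstBddPred (k : ℕ) (π : List ℕ → ℕ) (f : ℕ → ℕ) : Prop :=
  ∀ᶠ i in atTop, ∃ j : ℕ, i ≤ j ∧ j < i + k ∧ f j ≤ π (seg f j)

/-- The constant bounding evasion number `𝔢^const_≤(k)`. -/
def eConstLe (k : ℕ) : Cardinal :=
  sInf {c | ∃ F : Set (ℕ → ℕ),
    (∀ π : List ℕ → ℕ, ∃ f ∈ F, ¬ ConstBddPred k π f) ∧ Cardinal.mk F = c}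

/-- The constant bounding prediction number `𝔳^const_≤(k)`. -/
def vConstLe (k : ℕ) : Cardinal :=
  sInf {c | ∃ Ps : Set (List ℕ → ℕ),
    (∀ f : ℕ → ℕ, ∃ π ∈ Ps, ConstBddPred k π f) ∧ Cardinal.mk Ps = c}

/-- The asymptotic density zero ideal `𝒵` on `ω`. -/
def densityZero : Set (Set ℕ) :=
  {A : Set ℕ | Tendsto (fun n : ℕ => ((A ∩ Iio n).ncard : ℝ) / (n : ℝ)) atTop (nhds (0 : ℝ))}

/-- The σ-ideal `ℰ` on `2^ω` generated by the closed null sets. -/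
def EIdeal : Set (Set (ℕ → Bool)) :=
  {A | ∃ C : ℕ → Set (ℕ → Bool),
    (∀ n, IsClosedCantor (C n) ∧ IsNullCantor (C n)) ∧ A ⊆ ⋃ n, C n}


/-! ### Initial segments and cylinders -/

theorem seg_length' {X : Type} (x : ℕ → X) (n : ℕ) : (seg x n).length = n := by
  simp [seg]

theorem seg_getElem' {X : Type} (x : ℕ → X) (n i : ℕ) (h : i < (seg x n).length) :
    (seg x n)[i] = x i := by
  simp [seg]

theorem seg_append' {X : Type} (x : ℕ → X) (a b : ℕ) :
    seg x (a + b) = seg x a ++ seg (fun i => x (a + i)) b := by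
  simp [seg, List.range_add]

theorem seg_succ' {X : Type} (x : ℕ → X) (a : ℕ) : seg x (a + 1) = seg x a ++ [x a] := by
  simp [seg, List.range_succ]

theorem seg_congr' {X : Type} (x y : ℕ → X) (a : ℕ) (h : ∀ i < a, x i = y i) :
    seg x a = seg y a := by
  simp only [seg]
  apply List.map_congr_left
  intro i hi
  exact h i (List.mem_range.1 hi)

theorem mem_cylSet_iff (y : ℕ → Bool) (s : List Bool) :
    y ∈ cylSet s ↔ seg y s.length = s := by
  constructor
  · intro h
    apply List.ext_getElem
    · simp [seg_length']
    · intro i h1 h2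
      rw [seg_getElem']
      exact h ⟨i, h2⟩
  · intro h i
    have h1 : i.val < (seg y s.length).length := by rw [seg_length']; exact i.2
    have := seg_getElem' y s.length i.val h1
    rw [← this]
    simp [h]

theorem mem_cylSet_append (y z : ℕ → Bool) (s : List Bool) (m : ℕ) :
    y ∈ cylSet (s ++ seg z m) ↔ y ∈ cylSet s ∧ ∀ i < m, y (s.length + i) = z i := by
  rw [mem_cylSet_iff, mem_cylSet_iff, List.length_append, seg_length', seg_append']
  constructor
  · intro h
    obtain ⟨h1, h2⟩ := List.append_inj h (by simp [seg_length'])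
    refine ⟨h1, fun i hi => ?_⟩
    have e1 := seg_getElem' (fun i => y (s.length + i)) m i (by rw [seg_length']; exact hi)
    have e2 := seg_getElem' z m i (by rw [seg_length']; exact hi)
    simp only [h2] at e1
    rw [← e1, e2]
  · rintro ⟨h1, h2⟩
    rw [h1, seg_congr' _ _ m h2]

/-! ### The density zero ideal -/

theorem densityZero_iff (A : Set ℕ) :
    A ∈ densityZero ↔ ∀ j : ℕ, ∃ N : ℕ, ∀ n ≥ N, j * (A ∩ Iio n).ncard ≤ n := by
  unfold densityZero
  rw [mem_ofPred_eq, Metric.tendsto_atTop]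
  constructor
  · intro h j
    obtain ⟨N, hN⟩ := h (1 / (j + 1)) (by positivity)
    refine ⟨N + 1, fun n hn => ?_⟩
    have h1 := hN n (by omega)
    have hn0 : (0 : ℝ) < n := by exact_mod_cast (by omega : 0 < n)
    rw [Real.dist_eq, sub_zero, abs_of_nonneg (by positivity), div_lt_div_iff₀ hn0 (by positivity)]
      at h1
    have h2 : ((A ∩ Iio n).ncard : ℝ) * (j + 1) ≤ n := by linarith
    have h3 : (A ∩ Iio n).ncard * (j + 1) ≤ n := by exact_mod_cast h2
    nlinarith
  · intro h ε hε
    obtain ⟨j, hj⟩ := exists_nat_gt (1 / ε)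
    obtain ⟨N, hN⟩ := h j
    refine ⟨N + 1, fun n hn => ?_⟩
    have h1 := hN n (by omega)
    have hn0 : (0 : ℝ) < n := by exact_mod_cast (by omega : 0 < n)
    rw [Real.dist_eq, sub_zero, abs_of_nonneg (by positivity), div_lt_iff₀ hn0]
    have h2 : (j : ℝ) * ((A ∩ Iio n).ncard : ℝ) ≤ n := by exact_mod_cast h1
    rw [div_lt_iff₀ hε] at hj
    by_cases h0 : (A ∩ Iio n).ncard = 0
    · rw [h0]; simp; positivity
    · have h3 : (0 : ℝ) < ((A ∩ Iio n).ncard : ℝ) := by exact_mod_cast Nat.pos_of_ne_zero h0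
      nlinarith

theorem ncard_Iio_mono {A B : Set ℕ} (h : A ⊆ B) (n : ℕ) :
    (A ∩ Iio n).ncard ≤ (B ∩ Iio n).ncard :=
  Set.ncard_le_ncard (inter_subset_inter_left _ h) ((finite_Iio n).inter_of_right _)

theorem dz_subset {A B : Set ℕ} (h : A ⊆ B) (hB : B ∈ densityZero) : A ∈ densityZero := by
  rw [densityZero_iff] at *
  intro j
  obtain ⟨N, hN⟩ := hB j
  exact ⟨N, fun n hn => (Nat.mul_le_mul_left _ (ncard_Iio_mono h n)).trans (hN n hn)⟩

theorem dz_union {A B : Set ℕ} (hA : A ∈ densityZero) (hB : B ∈ densityZero) :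
    A ∪ B ∈ densityZero := by
  rw [densityZero_iff] at *
  intro j
  obtain ⟨N, hN⟩ := hA (2 * j)
  obtain ⟨N', hN'⟩ := hB (2 * j)
  refine ⟨max N N', fun n hn => ?_⟩
  have h1 := hN n (le_trans (le_max_left _ _) hn)
  have h2 := hN' n (le_trans (le_max_right _ _) hn)
  have h3 : ((A ∪ B) ∩ Iio n).ncard ≤ (A ∩ Iio n).ncard + (B ∩ Iio n).ncard := by
    rw [union_inter_distrib_right]
    exact Set.ncard_union_le _ _
  nlinarith

theorem dz_Iio (b : ℕ) : Iio b ∈ densityZero := by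
  rw [densityZero_iff]
  intro j
  refine ⟨j * b, fun n hn => le_trans ?_ hn⟩
  apply Nat.mul_le_mul_left
  calc (Iio b ∩ Iio n).ncard ≤ (Iio b).ncard := Set.ncard_le_ncard inter_subset_left (finite_Iio b)
    _ = b := by rw [← Finset.coe_Iio, Set.ncard_coe_finset]; simp

theorem dz_univ : (univ : Set ℕ) ∉ densityZero := by
  rw [densityZero_iff]
  intro h
  obtain ⟨N, hN⟩ := h 2
  have := hN (N + 1) (by omega)
  rw [univ_inter, ← Finset.coe_Iio, Set.ncard_coe_finset] at this
  simp at this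

theorem dz_iUnion (A : ℕ → Set ℕ) (h : ∀ n, A n ∈ densityZero) (m : ℕ) :
    (⋃ i ∈ Iio m, A i) ∈ densityZero := by
  induction m with
  | zero => exact dz_subset (by simp) (dz_Iio 0)
  | succ m ih =>
    refine dz_subset ?_ (dz_union ih (h m))
    intro x hx
    simp only [mem_iUnion, mem_Iio, mem_union] at hx ⊢
    obtain ⟨i, hi, hx⟩ := hx
    rcases Nat.lt_succ_iff_lt_or_eq.1 hi with h1 | rfl
    · exact Or.inl ⟨i, h1, hx⟩
    · exact Or.inr hx

/-- Sets that are almost contained in sparse periodic sets have density zero. -/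
theorem dz_of_periodic (A : Set ℕ)
    (h : ∀ J : ℕ, ∃ (M : ℕ) (R : Finset ℕ), J * R.card ≤ 2 ^ M ∧
      ∀ k ∈ A, M ≤ k → k % 2 ^ M ∈ R) : A ∈ densityZero := by
  rw [densityZero_iff]
  intro j
  obtain ⟨M, R, hR, hA⟩ := h (2 * j)
  refine ⟨2 * j * M + 2 ^ M, fun n hn => ?_⟩
  have hsub : A ∩ Iio n ⊆
      ((Finset.range M ∪ (R ×ˢ Finset.range (n / 2 ^ M + 1)).image
        (fun p => p.1 + 2 ^ M * p.2) : Finset ℕ) : Set ℕ) := by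
    rintro k ⟨hk, hkn⟩
    simp only [Finset.coe_union, Finset.coe_image, mem_union, Finset.coe_range, mem_Iio]
    by_cases hM : k < M
    · exact Or.inl hM
    · right
      refine ⟨(k % 2 ^ M, k / 2 ^ M), ?_, Nat.mod_add_div k (2 ^ M)⟩
      simp only [Finset.coe_product, mem_prod, Finset.mem_coe, Finset.mem_range]
      refine ⟨hA k hk (by omega), ?_⟩
      have : k / 2 ^ M ≤ n / 2 ^ M := Nat.div_le_div_right (le_of_lt hkn)
      omega
  have h1 : (A ∩ Iio n).ncard ≤ M + R.card * (n / 2 ^ M + 1) := by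
    refine (Set.ncard_le_ncard hsub (Finset.finite_toSet _)).trans ?_
    rw [Set.ncard_coe_finset]
    refine (Finset.card_union_le _ _).trans ?_
    refine Nat.add_le_add (by simp) (Finset.card_image_le.trans ?_)
    simp
  have h2 : 2 ^ M * (n / 2 ^ M) ≤ n := Nat.mul_div_le n (2 ^ M)
  have h3 : 2 * j * R.card * (n / 2 ^ M + 1) ≤ 2 ^ M * (n / 2 ^ M + 1) :=
    Nat.mul_le_mul_right _ hR
  have h4 : 2 * j * (A ∩ Iio n).ncard ≤ 2 * j * (M + R.card * (n / 2 ^ M + 1)) :=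
    Nat.mul_le_mul_left _ h1
  nlinarith

/-! ### The ideal `M_𝒵` -/

theorem MIdeal_single {A : Set (ℕ → ℕ)} (hA : A ∈ MIdeal densityZero) :
    ∃ φ : List ℕ → Set ℕ, (∀ s, φ s ∈ densityZero) ∧
      ∀ x ∈ A, ∀ᶠ m in atTop, x m ∈ φ (seg x m) := by
  obtain ⟨φ, hφ, hA⟩ := hA
  refine ⟨fun s => ⋃ i ∈ Iio s.length, φ i s, fun s => dz_iUnion _ (fun n => hφ n s) _, ?_⟩
  intro x hx
  obtain ⟨n, hn⟩ := mem_iUnion.1 (hA hx)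
  filter_upwards [hn, eventually_gt_atTop n] with m hm hmn
  simp only [mem_iUnion, mem_Iio, seg_length']
  exact ⟨n, hmn, hm⟩

theorem MIdeal_of_single {A : Set (ℕ → ℕ)} (φ : List ℕ → Set ℕ) (hφ : ∀ s, φ s ∈ densityZero)
    (h : ∀ x ∈ A, ∀ᶠ m in atTop, x m ∈ φ (seg x m)) : A ∈ MIdeal densityZero :=
  ⟨fun _ => φ, fun _ => hφ, fun x hx => mem_iUnion.2 ⟨0, h x hx⟩⟩

theorem MIdeal_subset {A B : Set (ℕ → ℕ)} (h : A ⊆ B) (hB : B ∈ MIdeal densityZero) :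
    A ∈ MIdeal densityZero := by
  obtain ⟨φ, hφ, hB⟩ := hB
  exact ⟨φ, hφ, h.trans hB⟩

theorem MIdeal_leStar (g : ℕ → ℕ) : {x | LeStar x g} ∈ MIdeal densityZero := by
  refine MIdeal_of_single (fun s => Iio (g s.length + 1)) (fun s => dz_Iio _) ?_
  intro x hx
  filter_upwards [hx] with m hm
  rw [seg_length', mem_Iio]
  omega

theorem exists_seq_seg {X : Type} (f : List X → X) : ∃ x : ℕ → X, ∀ n, x n = f (seg x n) := by
  let L : ℕ → List X := fun n => Nat.rec [] (fun _ l => l ++ [f l]) n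
  have hL : ∀ n, L (n + 1) = L n ++ [f (L n)] := fun n => rfl
  refine ⟨fun n => f (L n), fun n => ?_⟩
  have : ∀ n, seg (fun n => f (L n)) n = L n := by
    intro n
    induction n with
    | zero => rfl
    | succ n ih => rw [seg_succ', ih, hL]
  rw [this]

theorem MIdeal_univ : (univ : Set (ℕ → ℕ)) ∉ MIdeal densityZero := by
  intro h
  obtain ⟨φ, hφ, h⟩ := MIdeal_single h
  have h1 : ∀ s, ∃ k, k ∉ φ s := by
    intro s
    by_contra! hc
    exact dz_univ ((eq_univ_of_forall hc) ▸ hφ s)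
  choose f hf using h1
  obtain ⟨x, hx⟩ := exists_seq_seg f
  obtain ⟨m, hm⟩ := (h x (mem_univ _)).exists
  rw [hx] at hm
  exact hf _ hm

/-! ### From `ω^ω` to `2^ω`: preimages of `ℰ`-sets are in `M_𝒵` -/

theorem testBit_mod_unique {a r r' : ℕ} (h : ∀ i < a, r.testBit i = r'.testBit i) :
    r % 2 ^ a = r' % 2 ^ a := by
  apply Nat.eq_of_testBit_eq
  intro i
  rw [Nat.testBit_mod_two_pow, Nat.testBit_mod_two_pow]
  by_cases hi : i < a
  · simp [hi, h i hi]
  · simp [hi]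

/-- The number of `r < 2^M` whose bits are compatible with a given string. -/
theorem card_compat (σ t : List Bool) (M : ℕ) (ht : t.length ≤ σ.length + M) (R : Finset ℕ)
    (hR : ∀ r ∈ R, r < 2 ^ M ∧ ∃ y : ℕ → Bool, y ∈ cylSet t ∧
      ∀ i < M, y (σ.length + i) = r.testBit i) :
    R.card ≤ 2 ^ (σ.length + M - t.length) := by
  set a := t.length - σ.length with ha
  have haM : a ≤ M := by omega
  have h1 : R.card ≤ (Finset.range (2 ^ (M - a))).card := by
    apply Finset.card_le_card_of_injOn (fun r => r / 2 ^ a)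
    · intro r hr
      simp only [Finset.coe_range, mem_Iio]
      rw [Nat.div_lt_iff_lt_mul (by positivity), ← pow_add]
      rw [Nat.sub_add_cancel haM]
      exact (hR r hr).1
    · intro r hr r' hr' he
      simp only at he
      obtain ⟨_, y, hy, hyr⟩ := hR r hr
      obtain ⟨_, y', hy', hyr'⟩ := hR r' hr'
      have hm : r % 2 ^ a = r' % 2 ^ a := by
        apply testBit_mod_unique
        intro i hi
        rw [← hyr i (by omega), ← hyr' i (by omega)]
        have e1 := hy ⟨σ.length + i, by omega⟩
        have e2 := hy' ⟨σ.length + i, by omega⟩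
        exact e1.trans e2.symm
      rw [← Nat.mod_add_div r (2 ^ a), ← Nat.mod_add_div r' (2 ^ a), hm, he]
  rw [Finset.card_range] at h1
  exact h1.trans (Nat.pow_le_pow_right (by norm_num) (by omega))

theorem isOpen_cylSet (s : List Bool) : IsOpen (cylSet s) := by
  have : cylSet s = ⋂ i : Fin s.length, {x : ℕ → Bool | x i.val = s.get i} := by
    ext x; simp [cylSet]
  rw [this]
  refine isOpen_iInter_of_finite fun i => ?_
  have hcont : Continuous (fun x : ℕ → Bool => x i.val) := continuous_apply i.val
  exact hcont.isOpen_preimage {s.get i} (isOpen_discrete _)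

theorem closed_null_count (C : Set (ℕ → Bool)) (hc : IsClosedCantor C) (hn : IsNullCantor C)
    (σ : List Bool) (J : ℕ) : ∃ (M : ℕ) (R : Finset ℕ), J * R.card ≤ 2 ^ M ∧
      ∀ k : ℕ, (∃ y ∈ C, y ∈ cylSet σ ∧ ∀ i < M, y (σ.length + i) = k.testBit i) →
        k % 2 ^ M ∈ R := by
  classical
  have hc' : IsClosed C := hc
  set ε : ℝ≥0∞ := ((J + 1 : ℕ) : ℝ≥0∞)⁻¹ * (2⁻¹) ^ σ.length with hε
  have hε0 : 0 < ε := by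
    rw [hε]
    apply ENNReal.mul_pos
    · simp
    · apply pow_ne_zero; simp
  obtain ⟨s, hs, hsum⟩ := hn ε hε0
  obtain ⟨I, hI⟩ := hc'.isCompact.elim_finite_subcover (fun n => cylSet (s n))
    (fun n => isOpen_cylSet _) hs
  set M := ∑ i ∈ I, (s i).length with hM
  have hlen : ∀ i ∈ I, (s i).length ≤ M := fun i hi =>
    Finset.single_le_sum (f := fun i => (s i).length) (fun _ _ => Nat.zero_le _) hi
  set D := σ.length + M with hD
  let P : ℕ → ℕ → Prop := fun i r => ∃ y : ℕ → Bool, y ∈ cylSet (s i) ∧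
      ∀ j < M, y (σ.length + j) = r.testBit j
  set R : Finset ℕ := I.biUnion (fun i => (Finset.range (2 ^ M)).filter (P i)) with hR
  have hcard : R.card ≤ ∑ i ∈ I, 2 ^ (D - (s i).length) := by
    refine Finset.card_biUnion_le.trans (Finset.sum_le_sum fun i hi => ?_)
    apply card_compat σ (s i) M (by have := hlen i hi; omega)
    intro r hr
    simp only [Finset.mem_filter, Finset.mem_range] at hr
    exact hr
  refine ⟨M, R, ?_, ?_⟩
  · have h2 : (2 : ℝ≥0∞) ≠ 0 := by norm_num
    have h2t : (2 : ℝ≥0∞) ≠ ⊤ := by norm_num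
    have e1 : ((∑ i ∈ I, 2 ^ (D - (s i).length) : ℕ) : ℝ≥0∞)
        = 2 ^ D * ∑ i ∈ I, (2⁻¹ : ℝ≥0∞) ^ (s i).length := by
      rw [Nat.cast_sum, Finset.mul_sum]
      refine Finset.sum_congr rfl fun i hi => ?_
      have hl : (s i).length ≤ D := by have := hlen i hi; omega
      push_cast
      conv_rhs => rw [← Nat.sub_add_cancel hl, pow_add, mul_assoc, ← mul_pow,
        ENNReal.mul_inv_cancel h2 h2t, one_pow, mul_one]
    have e2 : ∑ i ∈ I, (2⁻¹ : ℝ≥0∞) ^ (s i).length ≤ ε :=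
      (ENNReal.sum_le_tsum I).trans hsum
    have e3 : (((J + 1) * R.card : ℕ) : ℝ≥0∞) ≤ ((2 ^ M : ℕ) : ℝ≥0∞) := by
      calc (((J + 1) * R.card : ℕ) : ℝ≥0∞)
          ≤ ((J + 1 : ℕ) : ℝ≥0∞) * ((∑ i ∈ I, 2 ^ (D - (s i).length) : ℕ) : ℝ≥0∞) := by
            rw [Nat.cast_mul]
            gcongr
        _ ≤ ((J + 1 : ℕ) : ℝ≥0∞) * (2 ^ D * ε) := by
            rw [e1]
            gcongr
        _ = (((J + 1 : ℕ) : ℝ≥0∞) * ((J + 1 : ℕ) : ℝ≥0∞)⁻¹) *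
              ((2 * 2⁻¹) ^ σ.length * 2 ^ M) := by
            rw [hε, hD, pow_add, mul_pow]; ring
        _ = ((2 ^ M : ℕ) : ℝ≥0∞) := by
            rw [ENNReal.mul_inv_cancel (by simp) (by simp), ENNReal.mul_inv_cancel h2 h2t]
            simp
    have e4 : (J + 1) * R.card ≤ 2 ^ M := by exact_mod_cast e3
    exact (Nat.mul_le_mul_right _ (Nat.le_succ J)).trans e4
  · rintro k ⟨y, hyC, hyσ, hyk⟩
    obtain ⟨i, hi, hyi⟩ := mem_iUnion₂.1 (hI hyC)
    simp only [hR, Finset.mem_biUnion, Finset.mem_filter, Finset.mem_range]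
    refine ⟨i, hi, Nat.mod_lt _ (by positivity), y, hyi, fun j hj => ?_⟩
    rw [Nat.testBit_mod_two_pow, hyk j hj]
    simp [hj]

/-- Coding of a finite sequence of naturals by a binary string. -/
def encList (s : List ℕ) : List Bool := s.flatMap (fun k => seg k.testBit (k + 1))

/-- Coding of an infinite sequence of naturals by an infinite binary sequence. -/
def encSeq (x : ℕ → ℕ) : ℕ → Bool := fun i => (encList (seg x (i + 1))).getD i false

theorem encList_seg_succ (x : ℕ → ℕ) (n : ℕ) :
    encList (seg x (n + 1)) = encList (seg x n) ++ seg (x n).testBit (x n + 1) := by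
  rw [seg_succ', encList, encList, List.flatMap_append]
  simp

theorem encList_length (x : ℕ → ℕ) (n : ℕ) : n ≤ (encList (seg x n)).length := by
  induction n with
  | zero => simp
  | succ n ih => rw [encList_seg_succ, List.length_append, seg_length']; omega

theorem encList_isPre (x : ℕ → ℕ) {a b : ℕ} (h : a ≤ b) :
    encList (seg x a) <+: encList (seg x b) := by
  obtain ⟨c, rfl⟩ := Nat.exists_eq_add_of_le h
  rw [seg_append', encList, encList, List.flatMap_append]
  exact List.prefix_append _ _

theorem encSeq_mem_cyl (x : ℕ → ℕ) (n : ℕ) : encSeq x ∈ cylSet (encList (seg x n)) := by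
  rintro ⟨i, hi⟩
  have h1 : i < (encList (seg x (i + 1))).length := encList_length x (i + 1)
  simp only [encSeq, List.get_eq_getElem, List.getD_eq_getElem _ _ h1]
  rcases le_total (i + 1) n with h | h
  · exact (encList_isPre x h).getElem h1
  · exact ((encList_isPre x h).getElem hi).symm

theorem preimage_mem_MIdeal_closed (C : Set (ℕ → Bool)) (hc : IsClosedCantor C)
    (hn : IsNullCantor C) : ∃ φ : List ℕ → Set ℕ, (∀ s, φ s ∈ densityZero) ∧
      ∀ x, encSeq x ∈ C → ∀ n, x n ∈ φ (seg x n) := by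
  refine ⟨fun s => {k | ∃ y ∈ C, y ∈ cylSet (encList s ++ seg k.testBit (k + 1))}, ?_, ?_⟩
  · intro s
    apply dz_of_periodic
    intro J
    obtain ⟨M, R, hR, h⟩ := closed_null_count C hc hn (encList s) J
    refine ⟨M, R, hR, ?_⟩
    rintro k ⟨y, hy, hyk⟩ hMk
    rw [mem_cylSet_append] at hyk
    exact h k ⟨y, hy, hyk.1, fun i hi => hyk.2 i (by omega)⟩
  · intro x hx n
    refine ⟨encSeq x, hx, ?_⟩
    rw [← encList_seg_succ]
    exact encSeq_mem_cyl x (n + 1)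

theorem preimage_mem_MIdeal (A : Set (ℕ → Bool)) (hA : A ∈ EIdeal) :
    encSeq ⁻¹' A ∈ MIdeal densityZero := by
  obtain ⟨C, hC, hA⟩ := hA
  choose φ hφ h using fun n => preimage_mem_MIdeal_closed (C n) (hC n).1 (hC n).2
  refine ⟨φ, hφ, ?_⟩
  intro x hx
  obtain ⟨n, hn⟩ := mem_iUnion.1 (hA hx)
  exact mem_iUnion.2 ⟨n, Eventually.of_forall (h n x hn)⟩

theorem EIdeal_univ : (univ : Set (ℕ → Bool)) ∉ EIdeal := fun h =>
  MIdeal_univ (preimage_mem_MIdeal _ h)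

/-! ### Null sets from finite covers -/

theorem isNullCantor_of_finite (A : Set (ℕ → Bool))
    (h : ∀ j : ℕ, ∃ (m : ℕ) (Q : Finset (List Bool)), (∀ σ ∈ Q, σ.length = m) ∧
      (∀ y ∈ A, seg y m ∈ Q) ∧ 2 ^ j * Q.card ≤ 2 ^ m) : IsNullCantor A := by
  intro ε hε
  obtain ⟨j, hj⟩ : ∃ j : ℕ, (2⁻¹ : ℝ≥0∞) ^ j < ε / 3 := by
    have ht := ENNReal.tendsto_pow_atTop_nhds_zero_of_lt_one
      (r := (2⁻¹ : ℝ≥0∞)) (ENNReal.inv_lt_one.2 (by norm_num))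
    have hp : (0 : ℝ≥0∞) < ε / 3 := ENNReal.div_pos hε.ne' (by norm_num)
    exact (ht.eventually (gt_mem_nhds hp)).exists
  have h2 : (2 : ℝ≥0∞) ≠ 0 := by norm_num
  have h2t : (2 : ℝ≥0∞) ≠ ⊤ := by norm_num
  obtain ⟨m, Q, hlen, hA, hcard⟩ := h j
  have hl : Q.toList.length = Q.card := Q.length_toList
  let s : ℕ → List Bool := fun i =>
    if hi : i < Q.toList.length then Q.toList[i] else List.replicate (i + j) false
  refine ⟨s, ?_, ?_⟩
  · intro y hy
    have h1 := hA y hy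
    rw [← Finset.mem_toList] at h1
    obtain ⟨i, hi, he⟩ := List.getElem_of_mem h1
    refine mem_iUnion.2 ⟨i, ?_⟩
    simp only [s, hi, dif_pos, he]
    rw [mem_cylSet_iff, seg_length']
  · have hb : ∀ i, (2⁻¹ : ℝ≥0∞) ^ (s i).length ≤
        (if i ∈ Finset.range Q.card then (2⁻¹ : ℝ≥0∞) ^ m else 0) +
          (2⁻¹ : ℝ≥0∞) ^ j * (2⁻¹ : ℝ≥0∞) ^ i := by
      intro i
      by_cases hi : i < Q.toList.length
      · have : (s i).length = m := by
          simp only [s, hi, dif_pos]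
          exact hlen _ (Finset.mem_toList.1 (List.getElem_mem hi))
        rw [this, if_pos (by rw [Finset.mem_range]; omega)]
        exact le_self_add
      · have : (s i).length = i + j := by
          simp only [s, dif_neg hi, List.length_replicate]
        rw [this, pow_add, mul_comm]
        exact le_add_self
    have e1 : (Q.card : ℝ≥0∞) * (2⁻¹ : ℝ≥0∞) ^ m ≤ (2⁻¹ : ℝ≥0∞) ^ j := by
      have e : (2 : ℝ≥0∞) ^ j * Q.card ≤ 2 ^ m := by exact_mod_cast hcard
      calc (Q.card : ℝ≥0∞) * (2⁻¹ : ℝ≥0∞) ^ m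
          = (2⁻¹ * 2) ^ j * ((Q.card : ℝ≥0∞) * (2⁻¹ : ℝ≥0∞) ^ m) := by
            rw [ENNReal.inv_mul_cancel h2 h2t, one_pow, one_mul]
        _ = 2⁻¹ ^ j * (2 ^ j * Q.card) * (2⁻¹ : ℝ≥0∞) ^ m := by rw [mul_pow]; ring
        _ ≤ 2⁻¹ ^ j * 2 ^ m * (2⁻¹ : ℝ≥0∞) ^ m := by gcongr
        _ = 2⁻¹ ^ j := by
            rw [mul_assoc, ← mul_pow, ENNReal.mul_inv_cancel h2 h2t, one_pow, mul_one]
    calc ∑' i, (2⁻¹ : ℝ≥0∞) ^ (s i).length ≤ ∑' i,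
          ((if i ∈ Finset.range Q.card then (2⁻¹ : ℝ≥0∞) ^ m else 0) +
            (2⁻¹ : ℝ≥0∞) ^ j * (2⁻¹ : ℝ≥0∞) ^ i) := ENNReal.tsum_le_tsum hb
      _ = (Q.card : ℝ≥0∞) * (2⁻¹ : ℝ≥0∞) ^ m + (2⁻¹ : ℝ≥0∞) ^ j * 2 := by
          rw [ENNReal.tsum_add, ENNReal.tsum_mul_left, ENNReal.tsum_geometric,
            ENNReal.one_sub_inv_two, inv_inv]
          congr 1
          rw [tsum_eq_sum (s := Finset.range Q.card) (by intro b hb; rw [if_neg hb])]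
          rw [Finset.sum_congr rfl (fun i hi => if_pos hi)]
          simp
      _ ≤ 2⁻¹ ^ j + 2⁻¹ ^ j * 2 := by gcongr
      _ = 3 * 2⁻¹ ^ j := by ring
      _ ≤ 3 * (ε / 3) := by gcongr
      _ = ε := ENNReal.mul_div_cancel (by norm_num) (by norm_num)

theorem isClosed_of_determined (P : Set (ℕ → Bool)) (m : ℕ) (h : DeterminedBy P m) :
    IsClosed P := by
  rw [← isOpen_compl_iff, isOpen_iff_forall_mem_open]
  intro y hy
  refine ⟨cylSet (seg y m), ?_, isOpen_cylSet _, ?_⟩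
  · intro z hz hzP
    apply hy
    refine (h z y fun i hi => ?_).1 hzP
    have := hz ⟨i, by rw [seg_length']; exact hi⟩
    simpa [seg_getElem'] using this
  · rw [mem_cylSet_iff, seg_length']

theorem EIdeal_singleton (y : ℕ → Bool) : ({y} : Set (ℕ → Bool)) ∈ EIdeal := by
  refine ⟨fun _ => {y}, fun _ => ⟨?_, ?_⟩, fun z hz => mem_iUnion.2 ⟨0, hz⟩⟩
  · exact (isClosed_singleton : IsClosed ({y} : Set (ℕ → Bool)))
  · apply isNullCantor_of_finite
    intro j
    refine ⟨j, {seg y j}, ?_, ?_, ?_⟩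
    · intro σ hσ
      rw [Finset.mem_singleton.1 hσ, seg_length']
    · intro z hz
      rw [mem_singleton_iff.1 hz]
      simp
    · simp

/-! ### From `2^ω` to `ω^ω`: decoding in blocks -/

/-- The starting point of the `n`-th block. -/
def off (k : ℕ → ℕ) (n : ℕ) : ℕ := ∑ i ∈ Finset.range n, k i

theorem off_succ (k : ℕ → ℕ) (n : ℕ) : off k (n + 1) = off k n + k n :=
  Finset.sum_range_succ _ _

theorem off_mono (k : ℕ → ℕ) : Monotone (off k) :=
  monotone_nat_of_le_succ fun n => by rw [off_succ]; omega

/-- Decoding of the binary sequence `y` in blocks of lengths `k n`. -/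
def dec (k : ℕ → ℕ) (y : ℕ → Bool) (n : ℕ) : ℕ :=
  Nat.ofBits (fun i : Fin (k n) => y (off k n + i))

theorem dec_lt (k : ℕ → ℕ) (y : ℕ → Bool) (n : ℕ) : dec k y n < 2 ^ k n :=
  Nat.ofBits_lt_two_pow _

theorem seg_off_succ (k : ℕ → ℕ) (y : ℕ → Bool) (n : ℕ) :
    seg y (off k (n + 1)) = seg y (off k n) ++ seg (dec k y n).testBit (k n) := by
  rw [off_succ, seg_append']
  congr 1
  apply seg_congr'
  intro i hi
  rw [dec, Nat.testBit_ofBits_lt _ _ hi]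

theorem dec_congr (k : ℕ → ℕ) (y z : ℕ → Bool) (n : ℕ)
    (h : ∀ i < off k (n + 1), y i = z i) : dec k y n = dec k z n := by
  unfold dec
  congr 1
  funext i
  apply h
  rw [off_succ]
  omega

theorem seg_dec_congr (k : ℕ → ℕ) (y z : ℕ → Bool) (n : ℕ)
    (h : ∀ i < off k n, y i = z i) : seg (dec k y) n = seg (dec k z) n := by
  apply seg_congr'
  intro m hm
  apply dec_congr
  intro i hi
  exact h i (lt_of_lt_of_le hi (off_mono k hm))

/-- `N` is covered by few cylinders at level `off k n`. -/
def SmallCover (k : ℕ → ℕ) (N : Set (ℕ → Bool)) (j n : ℕ) : Prop :=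
  ∃ Q : Finset (List Bool), (∀ σ ∈ Q, σ.length = off k n) ∧
    (∀ y ∈ N, seg y (off k n) ∈ Q) ∧ 2 ^ j * Q.card ≤ 2 ^ off k n

theorem smallCover_step (k : ℕ → ℕ) (N : Set (ℕ → Bool)) (j n a b : ℕ)
    (W : List Bool → Finset ℕ)
    (hW : ∀ y ∈ N, dec k y n ∈ W (seg y (off k n)))
    (hcard : ∀ σ, 2 ^ a * (W σ).card ≤ 2 ^ k n)
    (hb : b = j + a) (h : SmallCover k N j n) : SmallCover k N b (n + 1) := by
  classical
  obtain ⟨Q, hlen, hN, hQ⟩ := h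
  refine ⟨Q.biUnion fun σ => (W σ).image fun r => σ ++ seg r.testBit (k n), ?_, ?_, ?_⟩
  · intro τ hτ
    simp only [Finset.mem_biUnion, Finset.mem_image] at hτ
    obtain ⟨σ, hσ, r, hr, rfl⟩ := hτ
    rw [List.length_append, seg_length', hlen σ hσ, off_succ]
  · intro y hy
    simp only [Finset.mem_biUnion, Finset.mem_image]
    exact ⟨_, hN y hy, _, hW y hy, (seg_off_succ k y n).symm⟩
  · have h1 : (Q.biUnion fun σ => (W σ).image fun r => σ ++ seg r.testBit (k n)).card ≤
        ∑ σ ∈ Q, (W σ).card :=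
      Finset.card_biUnion_le.trans (Finset.sum_le_sum fun σ _ => Finset.card_image_le)
    have h2 : 2 ^ a * ∑ σ ∈ Q, (W σ).card ≤ Q.card * 2 ^ k n := by
      rw [Finset.mul_sum]
      refine (Finset.sum_le_sum fun σ _ => hcard σ).trans ?_
      simp
    subst hb
    rw [off_succ, pow_add, pow_add]
    calc 2 ^ j * 2 ^ a *
          (Q.biUnion fun σ => (W σ).image fun r => σ ++ seg r.testBit (k n)).card
        ≤ 2 ^ j * 2 ^ a * ∑ σ ∈ Q, (W σ).card := Nat.mul_le_mul_left _ h1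
      _ = 2 ^ j * (2 ^ a * ∑ σ ∈ Q, (W σ).card) := by ring
      _ ≤ 2 ^ j * (Q.card * 2 ^ k n) := Nat.mul_le_mul_left _ h2
      _ = 2 ^ j * Q.card * 2 ^ k n := by ring
      _ ≤ 2 ^ off k n * 2 ^ k n := Nat.mul_le_mul_right _ hQ

/-- The level `n` is good: at level `n` at most half of the values are allowed by `φ`. -/
def GoodLevel (k : ℕ → ℕ) (φ : List ℕ → Set ℕ) (n : ℕ) : Prop :=
  ∀ y, 2 * (φ (seg (dec k y) n) ∩ Iio (2 ^ k n)).ncard ≤ 2 ^ k n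

theorem smallCover_all (k : ℕ → ℕ) (φ : List ℕ → Set ℕ) (n0 : ℕ) (N : Set (ℕ → Bool))
    (hN : ∀ y ∈ N, ∀ n ≥ n0, dec k y n ∈ φ (seg (dec k y) n))
    (hg : ∃ᶠ n in atTop, GoodLevel k φ n) (j : ℕ) : ∃ n, SmallCover k N j n := by
  classical
  have hstep : ∀ j n, SmallCover k N j n → SmallCover k N j (n + 1) := fun j n h =>
    smallCover_step k N j n 0 j (fun _ => Finset.range (2 ^ k n))
      (fun y _ => Finset.mem_range.2 (dec_lt k y n)) (by simp) rfl h
  have hmono : ∀ j n m, n ≤ m → SmallCover k N j n → SmallCover k N j m := by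
    intro j n m hnm h
    induction m, hnm using Nat.le_induction with
    | base => exact h
    | succ m _ ih => exact hstep j m ih
  induction j with
  | zero =>
    refine ⟨0, {[]}, ?_, ?_, ?_⟩
    · simp [off]
    · simp [off, seg]
    · simp [off]
  | succ j ih =>
    obtain ⟨n, hn⟩ := ih
    obtain ⟨m, hm, hgm⟩ := (frequently_atTop.1 hg) (max n n0)
    refine ⟨m + 1, smallCover_step k N j m 1 (j + 1)
      (fun σ => (Finset.range (2 ^ k m)).filter
        fun r => r ∈ φ (seg (dec k fun i => σ.getD i false) m)) ?_ ?_ rfl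
      (hmono j n m (le_trans (le_max_left _ _) hm) hn)⟩
    · intro y hy
      rw [Finset.mem_filter]
      refine ⟨Finset.mem_range.2 (dec_lt k y m), ?_⟩
      have he : seg (dec k fun i => (seg y (off k m)).getD i false) m = seg (dec k y) m := by
        apply seg_dec_congr
        intro i hi
        rw [List.getD_eq_getElem _ _ (by rw [seg_length']; exact hi), seg_getElem']
      rw [he]
      exact hN y hy m (le_trans (le_max_right _ _) hm)
    · intro σ
      have := hgm (fun i => σ.getD i false)
      rw [pow_one]
      refine le_trans (le_of_eq ?_) this
      congr 1
      rw [← Set.ncard_coe_finset]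
      congr 1
      ext r
      simp [and_comm]

theorem dec_preimage_mem_EIdeal (k : ℕ → ℕ) (φ : List ℕ → Set ℕ)
    (hg : ∃ᶠ n in atTop, GoodLevel k φ n) :
    {y | ∀ᶠ m in atTop, dec k y m ∈ φ (seg (dec k y) m)} ∈ EIdeal := by
  refine ⟨fun n0 => {y | ∀ n ≥ n0, dec k y n ∈ φ (seg (dec k y) n)}, fun n0 => ⟨?_, ?_⟩, ?_⟩
  · have : {y | ∀ n ≥ n0, dec k y n ∈ φ (seg (dec k y) n)} =
        ⋂ n, ⋂ (_ : n ≥ n0), {y | dec k y n ∈ φ (seg (dec k y) n)} := by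
      ext y; simp
    show IsClosed {y | ∀ n ≥ n0, dec k y n ∈ φ (seg (dec k y) n)}
    rw [this]
    refine isClosed_iInter fun n => isClosed_iInter fun _ => ?_
    apply isClosed_of_determined _ (off k (n + 1))
    intro y z h
    have e1 := dec_congr k y z n h
    have e2 := seg_dec_congr k y z n
      (fun i hi => h i (lt_of_lt_of_le hi (off_mono k (Nat.le_succ n))))
    show dec k y n ∈ φ (seg (dec k y) n) ↔ dec k z n ∈ φ (seg (dec k z) n)
    rw [e1, e2]
  · apply isNullCantor_of_finite
    intro j
    obtain ⟨n, Q, h⟩ := smallCover_all k φ n0 _ (fun y hy => hy) hg j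
    exact ⟨off k n, Q, h⟩
  · intro y hy
    obtain ⟨n0, h⟩ := eventually_atTop.1 hy
    exact mem_iUnion.2 ⟨n0, h⟩

/-! ### Unboundedness and good levels -/

theorem exists_frequently_jump (h : ℕ → ℕ) : ∃ f : ℕ → ℕ, ∀ k : ℕ → ℕ, ¬ LeStar k f →
    ∃ᶠ n in atTop, h (k n) < k (n + 1) := by
  let H : ℕ → ℕ := fun m => (∑ i ∈ Finset.range (m + 1), h i) + m + 1
  have hH : ∀ m, h m ≤ H m := by
    intro m
    have := Finset.single_le_sum (f := h) (fun _ _ => Nat.zero_le _)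
      (Finset.mem_range.2 (show m < m + 1 by omega))
    simp only [H]
    omega
  have hmono : Monotone H := by
    refine monotone_nat_of_le_succ fun m => ?_
    simp only [H]
    rw [Finset.sum_range_succ _ (m + 1)]
    omega
  have hid : ∀ m, m + 1 ≤ H m := by
    intro m; simp only [H]; omega
  have hit : Monotone fun m => H^[m] := Function.monotone_iterate_of_id_le
    (fun m => (Nat.le_succ m).trans (hid m))
  have hge : ∀ c, c ≤ H^[c] 0 := by
    intro c
    induction c with
    | zero => simp
    | succ c ih =>
      rw [Function.iterate_succ_apply']
      exact (Nat.succ_le_succ ih).trans (hid _)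
  refine ⟨fun n => H^[2 * n] 0, fun k hk => ?_⟩
  by_contra hc
  rw [not_frequently] at hc
  obtain ⟨n0, hn0⟩ := eventually_atTop.1 hc
  apply hk
  have h1 : ∀ i, k (n0 + i) ≤ H^[i] (k n0) := by
    intro i
    induction i with
    | zero => simp
    | succ i ih =>
      rw [Function.iterate_succ_apply', ← add_assoc]
      have := hn0 (n0 + i) (by omega)
      exact (not_lt.1 this).trans ((hH _).trans (hmono ih))
  refine eventually_atTop.2 ⟨n0 + k n0, fun n hn => ?_⟩
  obtain ⟨i, rfl⟩ := Nat.exists_eq_add_of_le (show n0 ≤ n by omega)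
  calc k (n0 + i) ≤ H^[i] (k n0) := h1 i
    _ ≤ H^[i] (H^[k n0] 0) := hmono.iterate i (hge _)
    _ = H^[i + k n0] 0 := by rw [Function.iterate_add_apply]
    _ ≤ H^[2 * (n0 + i)] 0 := hit (by omega) 0

/-- A strictly increasing function above `g`. -/
def incr (g : ℕ → ℕ) (n : ℕ) : ℕ := ∑ i ∈ Finset.range (n + 1), (g i + 1)

theorem incr_strictMono (g : ℕ → ℕ) : StrictMono (incr g) :=
  strictMono_nat_of_lt_succ fun n => by
    rw [incr, incr, Finset.sum_range_succ _ (n + 1)]; omega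

theorem le_incr (g : ℕ → ℕ) (n : ℕ) : g n ≤ incr g n := by
  rw [incr, Finset.sum_range_succ]; omega

theorem finite_lists (m : ℕ) :
    {s : List ℕ | s.length ≤ m + 1 ∧ ∀ x ∈ s, x < 2 ^ m}.Finite := by
  refine ((List.finite_length_le (Fin (2 ^ m)) (m + 1)).image (List.map Fin.val)).subset ?_
  rintro s ⟨hs, hx⟩
  refine ⟨s.attach.map fun x => ⟨x.1, hx x.1 x.2⟩, ?_, ?_⟩
  · simpa using hs
  · simp

theorem exists_bound_good (φ : List ℕ → Set ℕ) (hφ : ∀ s, φ s ∈ densityZero) :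
    ∃ f : ℕ → ℕ, ∀ g : ℕ → ℕ, ¬ LeStar g f →
      ∃ᶠ n in atTop, GoodLevel (incr g) φ n := by
  have h1 : ∀ s, ∃ M : ℕ, ∀ n ≥ M, 2 * (φ s ∩ Iio n).ncard ≤ n := fun s =>
    (densityZero_iff _).1 (hφ s) 2
  choose M hM using h1
  have h2 : ∀ m, ∃ b, ∀ s : List ℕ, s.length ≤ m + 1 → (∀ x ∈ s, x < 2 ^ m) → M s ≤ b := by
    intro m
    obtain ⟨b, hb⟩ := ((finite_lists m).image M).bddAbove
    exact ⟨b, fun s hs hx => hb ⟨s, ⟨hs, hx⟩, rfl⟩⟩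
  choose h hh using h2
  obtain ⟨f, hf⟩ := exists_frequently_jump h
  refine ⟨f, fun g hg => ?_⟩
  have h3 : ¬ LeStar (incr g) f := by
    intro hc
    apply hg
    filter_upwards [hc] with n hn
    exact (le_incr g n).trans hn
  have h4 := hf (incr g) h3
  rw [frequently_atTop] at h4 ⊢
  intro a
  obtain ⟨n, hn, hlt⟩ := h4 a
  refine ⟨n + 1, by omega, fun y => ?_⟩
  apply hM
  have h5 : M (seg (dec (incr g) y) (n + 1)) ≤ h (incr g n) := by
    apply hh
    · rw [seg_length']
      have := (incr_strictMono g).id_le n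
      simp only [id] at this
      omega
    · intro x hx
      simp only [seg, List.mem_map, List.mem_range] at hx
      obtain ⟨i, hi, rfl⟩ := hx
      refine (dec_lt _ y i).trans_le (Nat.pow_le_pow_right (by norm_num) ?_)
      exact (incr_strictMono g).monotone (by omega)
  exact h5.trans (hlt.le.trans (Nat.lt_two_pow_self).le)

theorem exists_bound_EIdeal (A : Set (ℕ → ℕ)) (hA : A ∈ MIdeal densityZero) :
    ∃ f : ℕ → ℕ, ∀ g : ℕ → ℕ, ¬ LeStar g f → dec (incr g) ⁻¹' A ∈ EIdeal := by
  obtain ⟨φ, hφ, hA⟩ := MIdeal_single hA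
  obtain ⟨f, hf⟩ := exists_bound_good φ hφ
  refine ⟨f, fun g hg => ?_⟩
  obtain ⟨C, hC, hsub⟩ := dec_preimage_mem_EIdeal (incr g) φ (hf g hg)
  exact ⟨C, hC, fun y hy => hsub (hA _ hy)⟩

theorem EIdeal_subset {A B : Set (ℕ → Bool)} (h : A ⊆ B) (hB : B ∈ EIdeal) : A ∈ EIdeal := by
  obtain ⟨C, hC, hB⟩ := hB
  exact ⟨C, hC, h.trans hB⟩

/-! ### The cardinal invariants -/

theorem infinite_of_unbounded (F : Set (ℕ → ℕ)) (hF : ∀ g : ℕ → ℕ, ∃ f ∈ F, ¬ LeStar f g) :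
    F.Infinite := by
  intro hfin
  obtain ⟨f, hf, h⟩ := hF (fun n => ∑ f ∈ hfin.toFinset, f n)
  apply h
  refine Eventually.of_forall fun n => ?_
  exact Finset.single_le_sum (f := fun f : ℕ → ℕ => f n) (fun _ _ => Nat.zero_le _)
    (hfin.mem_toFinset.2 hf)

theorem bNum_attained : ∃ F : Set (ℕ → ℕ), (∀ g : ℕ → ℕ, ∃ f ∈ F, ¬ LeStar f g) ∧
    Cardinal.mk F = bNum := by
  refine csInf_mem (s := {c | ∃ F : Set (ℕ → ℕ), (∀ g : ℕ → ℕ, ∃ f ∈ F, ¬ LeStar f g) ∧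
    Cardinal.mk F = c}) ⟨_, univ, fun g => ⟨fun n => g n + 1, mem_univ _, ?_⟩, rfl⟩
  intro h
  obtain ⟨n, hn⟩ := h.exists
  simp only at hn
  omega

theorem dNum_attained : ∃ F : Set (ℕ → ℕ), (∀ f : ℕ → ℕ, ∃ g ∈ F, LeStar f g) ∧
    Cardinal.mk F = dNum :=
  csInf_mem (s := {c | ∃ F : Set (ℕ → ℕ), (∀ f : ℕ → ℕ, ∃ g ∈ F, LeStar f g) ∧
    Cardinal.mk F = c}) ⟨_, univ, fun f => ⟨f, mem_univ _, Eventually.of_forall fun _ => le_rfl⟩,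
      rfl⟩

theorem nonE_attained : ∃ S : Set (ℕ → Bool), S ∉ EIdeal ∧
    Cardinal.mk S = nonIdeal EIdeal :=
  csInf_mem (s := {c | ∃ S : Set (ℕ → Bool), S ∉ EIdeal ∧ Cardinal.mk S = c})
    ⟨_, univ, EIdeal_univ, rfl⟩

theorem nonM_attained : ∃ S : Set (ℕ → ℕ), S ∉ MIdeal densityZero ∧
    Cardinal.mk S = nonIdeal (MIdeal densityZero) :=
  csInf_mem (s := {c | ∃ S : Set (ℕ → ℕ), S ∉ MIdeal densityZero ∧ Cardinal.mk S = c})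
    ⟨_, univ, MIdeal_univ, rfl⟩

theorem covE_attained : ∃ 𝒜 : Set (Set (ℕ → Bool)), 𝒜 ⊆ EIdeal ∧ ⋃₀ 𝒜 = Set.univ ∧
    Cardinal.mk 𝒜 = covIdeal EIdeal := by
  refine csInf_mem (s := {c | ∃ 𝒜 : Set (Set (ℕ → Bool)), 𝒜 ⊆ EIdeal ∧ ⋃₀ 𝒜 = Set.univ ∧
    Cardinal.mk 𝒜 = c}) ⟨_, range fun y => {y}, ?_, ?_, rfl⟩
  · rintro _ ⟨y, rfl⟩
    exact EIdeal_singleton y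
  · exact eq_univ_of_forall fun y => ⟨{y}, ⟨y, rfl⟩, rfl⟩

theorem covM_attained : ∃ 𝒜 : Set (Set (ℕ → ℕ)), 𝒜 ⊆ MIdeal densityZero ∧
    ⋃₀ 𝒜 = Set.univ ∧ Cardinal.mk 𝒜 = covIdeal (MIdeal densityZero) := by
  refine csInf_mem (s := {c | ∃ 𝒜 : Set (Set (ℕ → ℕ)), 𝒜 ⊆ MIdeal densityZero ∧
    ⋃₀ 𝒜 = Set.univ ∧ Cardinal.mk 𝒜 = c}) ⟨_, range fun g => {x | LeStar x g}, ?_, ?_, rfl⟩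
  · rintro _ ⟨g, rfl⟩
    exact MIdeal_leStar g
  · exact eq_univ_of_forall fun y => ⟨_, ⟨y, rfl⟩, Eventually.of_forall fun _ => le_rfl⟩

theorem nonM_le : nonIdeal (MIdeal densityZero) ≤ max bNum (nonIdeal EIdeal) := by
  obtain ⟨B, hB, hBc⟩ := bNum_attained
  obtain ⟨S, hS, hSc⟩ := nonE_attained
  have hT : Set.image2 (fun g y => dec (incr g) y) B S ∉ MIdeal densityZero := by
    intro hM
    obtain ⟨f, hf⟩ := exists_bound_EIdeal _ hM
    obtain ⟨g, hg, hgf⟩ := hB f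
    exact hS (EIdeal_subset (fun y hy => mem_image2_of_mem hg hy) (hf g hgf))
  have h1 : nonIdeal (MIdeal densityZero) ≤
      Cardinal.mk (Set.image2 (fun g y => dec (incr g) y) B S) := csInf_le' ⟨_, hT, rfl⟩
  have h2 : Cardinal.mk (Set.image2 (fun g y => dec (incr g) y) B S) ≤
      Cardinal.mk B * Cardinal.mk S := by
    rw [← Set.image_prod, ← Cardinal.mk_setProd]
    exact Cardinal.mk_image_le
  have h3 : ℵ₀ ≤ bNum := by
    rw [← hBc]
    exact Cardinal.infinite_iff.1 (infinite_of_unbounded B hB).to_subtype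
  rw [hBc, hSc] at h2
  exact h1.trans (h2.trans (Cardinal.mul_le_max_of_aleph0_le_left h3))

theorem le_nonM : max bNum (nonIdeal EIdeal) ≤ nonIdeal (MIdeal densityZero) := by
  obtain ⟨S, hS, hSc⟩ := nonM_attained
  rw [← hSc]
  apply max_le
  · refine csInf_le' ⟨S, fun g => ?_, rfl⟩
    by_contra! hc
    exact hS (MIdeal_subset (fun x hx => hc x hx) (MIdeal_leStar g))
  · refine le_trans (csInf_le' ⟨encSeq '' S, ?_, rfl⟩) Cardinal.mk_image_le
    intro hE
    exact hS (MIdeal_subset (subset_preimage_image _ _) (preimage_mem_MIdeal _ hE))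

theorem covM_le : covIdeal (MIdeal densityZero) ≤ min dNum (covIdeal EIdeal) := by
  apply le_min
  · obtain ⟨D, hD, hDc⟩ := dNum_attained
    rw [← hDc]
    refine le_trans (csInf_le' ⟨(fun g => {x | LeStar x g}) '' D, ?_, ?_, rfl⟩)
      Cardinal.mk_image_le
    · rintro _ ⟨g, _, rfl⟩
      exact MIdeal_leStar g
    · refine eq_univ_of_forall fun x => ?_
      obtain ⟨g, hg, hx⟩ := hD x
      exact ⟨_, ⟨g, hg, rfl⟩, hx⟩
  · obtain ⟨𝒜, h𝒜, hcov, hc⟩ := covE_attained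
    rw [← hc]
    refine le_trans (csInf_le' ⟨(fun A => encSeq ⁻¹' A) '' 𝒜, ?_, ?_, rfl⟩)
      Cardinal.mk_image_le
    · rintro _ ⟨A, hA, rfl⟩
      exact preimage_mem_MIdeal A (h𝒜 hA)
    · refine eq_univ_of_forall fun x => ?_
      obtain ⟨A, hA, hx⟩ : encSeq x ∈ ⋃₀ 𝒜 := hcov ▸ mem_univ _
      exact ⟨_, ⟨A, hA, rfl⟩, hx⟩

theorem le_covM : min dNum (covIdeal EIdeal) ≤ covIdeal (MIdeal densityZero) := by
  obtain ⟨𝒜, h𝒜, hcov, hc⟩ := covM_attained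
  rw [← hc]
  have h1 : ∀ A : 𝒜, ∃ f : ℕ → ℕ, ∀ g : ℕ → ℕ, ¬ LeStar g f →
      dec (incr g) ⁻¹' A.1 ∈ EIdeal := fun A => exists_bound_EIdeal A.1 (h𝒜 A.2)
  choose f hf using h1
  by_cases hd : ∀ g : ℕ → ℕ, ∃ A, LeStar g (f A)
  · refine (min_le_left _ _).trans (le_trans (csInf_le' ⟨range f, fun g => ?_, rfl⟩)
      Cardinal.mk_range_le)
    obtain ⟨A, hA⟩ := hd g
    exact ⟨f A, ⟨A, rfl⟩, hA⟩
  · push Not at hd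
    obtain ⟨g, hg⟩ := hd
    refine (min_le_right _ _).trans (le_trans
      (csInf_le' ⟨range fun A : 𝒜 => dec (incr g) ⁻¹' A.1, ?_, ?_, rfl⟩) Cardinal.mk_range_le)
    · rintro _ ⟨A, rfl⟩
      exact hf A g (hg A)
    · refine eq_univ_of_forall fun y => ?_
      obtain ⟨A, hA, hy⟩ : dec (incr g) y ∈ ⋃₀ 𝒜 := hcov ▸ mem_univ _
      exact ⟨_, ⟨⟨A, hA⟩, rfl⟩, hy⟩

/-- For the density zero ideal `𝒵`:
`non(M_𝒵) = max {𝔟, non(ℰ)}` and `cov(M_𝒵) = min {𝔡, cov(ℰ)}`. -/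
theorem stmt18 :
    nonIdeal (MIdeal densityZero) = max bNum (nonIdeal EIdeal) ∧
    covIdeal (MIdeal densityZero) = min dNum (covIdeal EIdeal) := by
  exact ⟨le_antisymm nonM_le le_nonM, le_antisymm covM_le le_covM⟩

end
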